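/- Let ν ≥ 1/2 and set φ₋(x) = x·I_{ν−1}(x)/I_ν(x) and φ₊(x) = x·K_{ν+1}(x)/K_ν(x) for x > 0. Then for all x > 0: (i) 0 < φ₋′(x) ≤ 1 and 0 < φ₊′(x) ≤ 1; (ii) ν + √(ν² + x(x − 1)) < φ₋(x) ≤ ν + √(ν² + x(x + 1)) and ν + √(ν² + x(x − 1)) < φ₊(x) ≤ ν + √(ν² + x(x + 1)); moreover equality in the non-strict inequalities of (i) and (ii) occurs only for φ₊ in the case ν = 1/2. -/

import Mathlib

/-- The modified Bessel function of the first kind,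
`I_ν(x) = ∑_{k=0}^∞ (x/2)^{2k+ν} / (k! Γ(k+ν+1))`
(here `1/Γ` vanishes at nonpositive integer arguments, since `Real.Gamma` is `0` there). -/
noncomputable def besselI (ν x : ℝ) : ℝ :=
  ∑' k : ℕ, (x / 2) ^ (2 * (k : ℝ) + ν) / ((Nat.factorial k : ℝ) * Real.Gamma ((k : ℝ) + ν + 1))

/-- The modified Bessel function of the second kind,
`K_ν(x) = ∫_0^∞ e^{-x cosh t} cosh(ν t) dt`. -/
noncomputable def besselK (ν x : ℝ) : ℝ :=
  ∫ t in Set.Ioi (0 : ℝ), Real.exp (-x * Real.cosh t) * Real.cosh (ν * t)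

/-- `φ₋(x) = x I_{ν-1}(x)/I_ν(x)`. -/
noncomputable def phiI (ν : ℝ) : ℝ → ℝ := fun x => x * (besselI (ν - 1) x / besselI ν x)

/-- `φ₊(x) = x K_{ν+1}(x)/K_ν(x)`. -/
noncomputable def phiK (ν : ℝ) : ℝ → ℝ := fun x => x * (besselK (ν + 1) x / besselK ν x)

/-!
Put `θ = x d/dx`. The recurrences give `φ₋ = ν + θ I_ν / I_ν` and `φ₊ = ν - θ K_ν / K_ν`, so the
Bessel equation turns into the Riccati equations `(φ₋ - ν)² = ν² + x (x - φ₋')` and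
`(φ₊ - ν)² = ν² + x (x + φ₊')`, and (ii) is a reformulation of (i).

For a solution `p` the derivative of `θ p / p` is `T / (x p²)` with `T = (x² + ν²) p² - (θ p)²`.
Since `T' = 2 x p² > 0`, the sign of `T` is determined by its limit `0`, at `0` for `p = I_ν` and at
`∞` for `p = K_ν`; this is `φ₋', φ₊' > 0`. The upper bounds follow in the same way from the signs
of `(x p² ∓ T)' = 2 √x p (w' ∓ w)`, where `w = √x p` has the normal form
`w'' = (1 + (ν² - 1/4) / x²) w`: both `e^x (w' - w)` and `e^{-x} (w' + w)` have derivative a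
positive multiple of `w'' - w`, so they are monotone and their sign is again read off at `0` for
`I_ν` and at `∞` for `K_ν`. For `ν = 1/2` the second one vanishes for `K_ν`, and `φ₊(x) = x + 1`.
-/

open Filter MeasureTheory Set Topology

section Monotone

variable {f f' : ℝ → ℝ} {a c x : ℝ}

lemma strictMonoOn_Ioi_of_hasDerivAt_pos (hf : ∀ y, a < y → HasDerivAt f (f' y) y)
    (hf' : ∀ y, a < y → 0 < f' y) : StrictMonoOn f (Ioi a) := by
  refine strictMonoOn_of_hasDerivWithinAt_pos (f' := f') (convex_Ioi a)
    (HasDerivAt.continuousOn hf) ?_ ?_ <;>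
    rw [interior_Ioi]
  exacts [fun y hy ↦ (hf y hy).hasDerivWithinAt, hf']

lemma monotoneOn_Ioi_of_hasDerivAt_nonneg (hf : ∀ y, a < y → HasDerivAt f (f' y) y)
    (hf' : ∀ y, a < y → 0 ≤ f' y) : MonotoneOn f (Ioi a) := by
  refine monotoneOn_of_hasDerivWithinAt_nonneg (f' := f') (convex_Ioi a)
    (HasDerivAt.continuousOn hf) ?_ ?_ <;>
    rw [interior_Ioi]
  exacts [fun y hy ↦ (hf y hy).hasDerivWithinAt, hf']

lemma lt_of_strictMonoOn_Ioi_of_tendsto_nhdsGT (hf : StrictMonoOn f (Ioi a))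
    (h : Tendsto f (𝓝[>] a) (𝓝 c)) (hx : a < x) : c < f x := by
  obtain ⟨y, hay, hyx⟩ := exists_between hx
  refine lt_of_le_of_lt (le_of_tendsto h ?_) (hf hay hx hyx)
  filter_upwards [Ioo_mem_nhdsGT hay] with z hz using (hf hz.1 hay hz.2).le

lemma lt_of_strictMonoOn_Ioi_of_tendsto_atTop (hf : StrictMonoOn f (Ioi a))
    (h : Tendsto f atTop (𝓝 c)) (hx : a < x) : f x < c := by
  have hx' : a < x + 1 := hx.trans (lt_add_one x)
  refine (hf hx hx' (lt_add_one x)).trans_le (ge_of_tendsto h ?_)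
  filter_upwards [eventually_ge_atTop (x + 1)] with z hz
  exact hf.monotoneOn hx' (hx'.trans_le hz) hz

end Monotone

/-- The Euler operator `θ = x d/dx`, in terms of which the modified Bessel equation reads
`θ² p = (x² + ν²) p`. -/
noncomputable def eulerDeriv (p : ℝ → ℝ) (x : ℝ) : ℝ := x * deriv p x

/-- `p` solves the modified Bessel equation `x² p'' + x p' = (x² + ν²) p` of order `ν` on `(0, ∞)`.
The equation is encoded through the derivative of `θ p = x p'`. -/
structure IsModifiedBesselSolution (ν : ℝ) (p : ℝ → ℝ) : Prop where
  differentiableAt : ∀ x, 0 < x → DifferentiableAt ℝ p x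
  hasDerivAt_eulerDeriv : ∀ x, 0 < x → HasDerivAt (eulerDeriv p) ((x + ν ^ 2 / x) * p x) x

/-- The Turán determinant of a solution of the modified Bessel equation of order `ν`: for
`p = I_ν` it equals `x² (I_ν² - I_{ν-1} I_{ν+1})`, and similarly for `K_ν`. -/
noncomputable def turanian (ν : ℝ) (p : ℝ → ℝ) (x : ℝ) : ℝ :=
  (x ^ 2 + ν ^ 2) * p x ^ 2 - eulerDeriv p x ^ 2

/-- The function `e^{-s x} (w' + s w)`, where `w = √x p` is the Liouville normal form of `p`. -/
noncomputable def liouvilleSlope (s : ℝ) (p : ℝ → ℝ) (x : ℝ) : ℝ :=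
  (eulerDeriv p x + (s * x + 1 / 2) * p x) * (Real.exp (-s * x) / √x)

section Limits

variable {ν : ℝ} {p : ℝ → ℝ}

lemma tendsto_zero_of_tendsto_self_mul_atTop (hp : Tendsto (fun y ↦ y * p y) atTop (𝓝 0)) :
    Tendsto p atTop (𝓝 0) := by
  have h := tendsto_inv_atTop_zero.mul hp
  rw [mul_zero] at h
  refine h.congr' ?_
  filter_upwards [eventually_ne_atTop 0] with y hy using inv_mul_cancel_left₀ hy _

lemma tendsto_turanian_nhdsGT_zero (hp₀ : Tendsto p (𝓝[>] 0) (𝓝 0))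
    (hq₀ : Tendsto (eulerDeriv p) (𝓝[>] 0) (𝓝 0)) :
    Tendsto (turanian ν p) (𝓝[>] 0) (𝓝 0) := by
  have hid : Tendsto (fun y : ℝ ↦ y) (𝓝[>] 0) (𝓝 0) := tendsto_id.mono_left nhdsWithin_le_nhds
  unfold turanian
  simpa using (((hid.pow 2).add_const (ν ^ 2)).mul (hp₀.pow 2)).sub (hq₀.pow 2)

lemma tendsto_turanian_atTop (hp : Tendsto (fun y ↦ y * p y) atTop (𝓝 0))
    (hq : Tendsto (eulerDeriv p) atTop (𝓝 0)) : Tendsto (turanian ν p) atTop (𝓝 0) := by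
  have hp' := tendsto_zero_of_tendsto_self_mul_atTop hp
  have h := ((hp.pow 2).add ((hp'.pow 2).const_mul (ν ^ 2))).sub (hq.pow 2)
  simp only [ne_eq, OfNat.ofNat_ne_zero, not_false_eq_true, zero_pow, mul_zero, add_zero,
    sub_zero] at h
  exact h.congr fun y ↦ by unfold turanian; ring

lemma tendsto_liouvilleSlope_one_atTop (hp₀ : Tendsto (fun y ↦ y * p y) atTop (𝓝 0))
    (hq₀ : Tendsto (eulerDeriv p) atTop (𝓝 0)) :
    Tendsto (liouvilleSlope 1 p) atTop (𝓝 0) := by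
  have hexp : Tendsto (fun y ↦ Real.exp (-1 * y) / √y) atTop (𝓝 0) := by
    simpa using Real.tendsto_exp_neg_atTop_nhds_zero.div_atTop Real.tendsto_sqrt_atTop
  have hp₀' := tendsto_zero_of_tendsto_self_mul_atTop hp₀
  have h := (hq₀.add (hp₀.add (hp₀'.const_mul (1 / 2)))).mul hexp
  simp only [mul_zero, add_zero] at h
  exact h.congr fun y ↦ by unfold liouvilleSlope; ring

end Limits

namespace IsModifiedBesselSolution

variable {ν s x : ℝ} {p : ℝ → ℝ}

lemma hasDerivAt (S : IsModifiedBesselSolution ν p) (hx : 0 < x) :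
    HasDerivAt p (eulerDeriv p x / x) x := by
  simpa only [eulerDeriv, mul_div_cancel_left₀ _ hx.ne'] using (S.differentiableAt x hx).hasDerivAt

lemma hasDerivAt_turanian (S : IsModifiedBesselSolution ν p) (hx : 0 < x) :
    HasDerivAt (turanian ν p) (2 * x * p x ^ 2) x := by
  have h := ((((hasDerivAt_id x).pow 2).add_const (ν ^ 2)).mul ((S.hasDerivAt hx).pow 2)).sub
    ((S.hasDerivAt_eulerDeriv x hx).pow 2)
  refine h.congr_deriv ?_
  simp only [id, Pi.pow_apply]
  field_simp
  ring

lemma hasDerivAt_mul_sq (S : IsModifiedBesselSolution ν p) (hx : 0 < x) :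
    HasDerivAt (fun y ↦ y * p y ^ 2) (p x ^ 2 + 2 * p x * eulerDeriv p x) x := by
  refine ((hasDerivAt_id x).mul ((S.hasDerivAt hx).pow 2)).congr_deriv ?_
  simp only [id, Pi.pow_apply]
  field_simp
  ring

lemma hasDerivAt_liouvilleSlope (S : IsModifiedBesselSolution ν p) (hs : s ^ 2 = 1) (hx : 0 < x) :
    HasDerivAt (liouvilleSlope s p)
      ((ν ^ 2 - 1 / 4) * p x * (Real.exp (-s * x) / (x * √x))) x := by
  have h := ((S.hasDerivAt_eulerDeriv x hx).add
    ((((hasDerivAt_id x).const_mul s).add_const (1 / 2)).mul (S.hasDerivAt hx))).mul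
    ((((hasDerivAt_id x).const_mul (-s)).exp).div (Real.hasDerivAt_sqrt hx.ne')
      (Real.sqrt_pos.2 hx).ne')
  refine h.congr_deriv ?_
  have hsqrt : √x ^ 2 = x := Real.sq_sqrt hx.le
  have hsqrt' : √x ≠ 0 := (Real.sqrt_pos.2 hx).ne'
  simp only [id, Pi.add_apply, Pi.mul_apply, Pi.div_apply]
  generalize Real.exp _ = E
  field_simp
  rw [hsqrt]
  linear_combination (-16 * E * x ^ 3 * p x) * hs

lemma hasDerivAt_eulerDeriv_div (S : IsModifiedBesselSolution ν p) (hx : 0 < x) (hp : p x ≠ 0) :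
    HasDerivAt (fun y ↦ eulerDeriv p y / p y) (turanian ν p x / (x * p x ^ 2)) x := by
  refine ((S.hasDerivAt_eulerDeriv x hx).div (S.hasDerivAt hx) hp).congr_deriv ?_
  unfold turanian
  field_simp

lemma strictMonoOn_turanian (S : IsModifiedBesselSolution ν p) (hp : ∀ y, 0 < y → p y ≠ 0) :
    StrictMonoOn (turanian ν p) (Ioi 0) :=
  strictMonoOn_Ioi_of_hasDerivAt_pos (fun _ hy ↦ S.hasDerivAt_turanian hy) fun y hy ↦ by
    have := hp y hy
    positivity

lemma turanian_pos (S : IsModifiedBesselSolution ν p) (hp : ∀ y, 0 < y → p y ≠ 0)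
    (hp₀ : Tendsto p (𝓝[>] 0) (𝓝 0)) (hq₀ : Tendsto (eulerDeriv p) (𝓝[>] 0) (𝓝 0)) (hx : 0 < x) :
    0 < turanian ν p x :=
  lt_of_strictMonoOn_Ioi_of_tendsto_nhdsGT (S.strictMonoOn_turanian hp)
    (tendsto_turanian_nhdsGT_zero hp₀ hq₀) hx

lemma liouvilleSlope_neg_one_pos (S : IsModifiedBesselSolution ν p) (hν : 1 / 2 ≤ |ν|)
    (hp : ∀ y, 0 < y → 0 < p y) (hq : ∀ y, 0 < y → 0 < eulerDeriv p y) (hx : 0 < x) :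
    0 < liouvilleSlope (-1) p x := by
  have hν' : 0 ≤ ν ^ 2 - 1 / 4 := by nlinarith [sq_abs ν]
  have hmono : MonotoneOn (liouvilleSlope (-1) p) (Ioi 0) :=
    monotoneOn_Ioi_of_hasDerivAt_nonneg
      (fun y hy ↦ S.hasDerivAt_liouvilleSlope (by norm_num) hy) fun y hy ↦ by
        have := hp y hy
        positivity
  have hmin : 0 < min x (1 / 2) := lt_min hx one_half_pos
  refine lt_of_lt_of_le ?_ (hmono hmin hx (min_le_left _ _))
  have hp' := hp _ hmin
  have hq' := hq _ hmin
  have : 0 ≤ -1 * min x (1 / 2) + 1 / 2 := by linarith [min_le_right x (1 / 2)]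
  unfold liouvilleSlope
  positivity

lemma turanian_lt_mul_sq (S : IsModifiedBesselSolution ν p) (hν : 1 / 2 ≤ |ν|)
    (hp : ∀ y, 0 < y → 0 < p y) (hq : ∀ y, 0 < y → 0 < eulerDeriv p y)
    (hp₀ : Tendsto p (𝓝[>] 0) (𝓝 0)) (hq₀ : Tendsto (eulerDeriv p) (𝓝[>] 0) (𝓝 0)) (hx : 0 < x) :
    turanian ν p x < x * p x ^ 2 := by
  have hmono : StrictMonoOn (fun y ↦ y * p y ^ 2 - turanian ν p y) (Ioi 0) := by
    refine strictMonoOn_Ioi_of_hasDerivAt_pos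
      (fun y hy ↦ (S.hasDerivAt_mul_sq hy).sub (S.hasDerivAt_turanian hy)) fun y hy ↦ ?_
    have hslope : 0 < eulerDeriv p y + (-1 * y + 1 / 2) * p y :=
      pos_of_mul_pos_left (S.liouvilleSlope_neg_one_pos hν hp hq hy) (by positivity)
    nlinarith [mul_pos (hp y hy) hslope]
  have hlim : Tendsto (fun y ↦ y * p y ^ 2 - turanian ν p y) (𝓝[>] 0) (𝓝 0) := by
    have hid : Tendsto (fun y : ℝ ↦ y) (𝓝[>] 0) (𝓝 0) := tendsto_id.mono_left nhdsWithin_le_nhds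
    simpa using (hid.mul (hp₀.pow 2)).sub (tendsto_turanian_nhdsGT_zero hp₀ hq₀)
  have hpos := lt_of_strictMonoOn_Ioi_of_tendsto_nhdsGT hmono hlim hx
  exact sub_pos.1 hpos

lemma turanian_neg (S : IsModifiedBesselSolution ν p) (hp : ∀ y, 0 < y → p y ≠ 0)
    (hp₀ : Tendsto (fun y ↦ y * p y) atTop (𝓝 0)) (hq₀ : Tendsto (eulerDeriv p) atTop (𝓝 0))
    (hx : 0 < x) : turanian ν p x < 0 :=
  lt_of_strictMonoOn_Ioi_of_tendsto_atTop (S.strictMonoOn_turanian hp)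
    (tendsto_turanian_atTop hp₀ hq₀) hx

lemma liouvilleSlope_one_neg (S : IsModifiedBesselSolution ν p) (hν : 1 / 2 < |ν|)
    (hp : ∀ y, 0 < y → 0 < p y) (hp₀ : Tendsto (fun y ↦ y * p y) atTop (𝓝 0))
    (hq₀ : Tendsto (eulerDeriv p) atTop (𝓝 0)) (hx : 0 < x) : liouvilleSlope 1 p x < 0 := by
  have hν' : 0 < ν ^ 2 - 1 / 4 := by nlinarith [sq_abs ν]
  refine lt_of_strictMonoOn_Ioi_of_tendsto_atTop ?_ (tendsto_liouvilleSlope_one_atTop hp₀ hq₀) hx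
  refine strictMonoOn_Ioi_of_hasDerivAt_pos
    (fun y hy ↦ S.hasDerivAt_liouvilleSlope (one_pow 2) hy) fun y hy ↦ ?_
  have := hp y hy
  positivity

lemma neg_mul_sq_lt_turanian (S : IsModifiedBesselSolution ν p) (hν : 1 / 2 < |ν|)
    (hp : ∀ y, 0 < y → 0 < p y) (hp₀ : Tendsto (fun y ↦ y * p y) atTop (𝓝 0))
    (hq₀ : Tendsto (eulerDeriv p) atTop (𝓝 0)) (hx : 0 < x) :
    -(x * p x ^ 2) < turanian ν p x := by
  have hmono : StrictMonoOn (fun y ↦ -(y * p y ^ 2) - turanian ν p y) (Ioi 0) := by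
    refine strictMonoOn_Ioi_of_hasDerivAt_pos
      (fun y hy ↦ (S.hasDerivAt_mul_sq hy).neg.sub (S.hasDerivAt_turanian hy)) fun y hy ↦ ?_
    have hslope : eulerDeriv p y + (1 * y + 1 / 2) * p y < 0 :=
      neg_of_mul_neg_left (S.liouvilleSlope_one_neg hν hp hp₀ hq₀ hy) (by positivity)
    nlinarith [mul_neg_of_pos_of_neg (hp y hy) hslope]
  have hlim : Tendsto (fun y ↦ -(y * p y ^ 2) - turanian ν p y) atTop (𝓝 0) := by
    have h := (hp₀.mul (tendsto_zero_of_tendsto_self_mul_atTop hp₀)).neg.sub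
      (tendsto_turanian_atTop (ν := ν) hp₀ hq₀)
    simp only [mul_zero, neg_zero, sub_zero] at h
    exact h.congr fun y ↦ by ring
  have hneg := lt_of_strictMonoOn_Ioi_of_tendsto_atTop hmono hlim hx
  exact sub_neg.1 hneg

end IsModifiedBesselSolution

section FirstKind

lemma one_div_Gamma_eq_self_mul (s : ℝ) : 1 / Real.Gamma s = s * (1 / Real.Gamma (s + 1)) := by
  have h := Complex.one_div_Gamma_eq_self_mul_one_div_Gamma_add_one s
  rw [← Complex.ofReal_one, ← Complex.ofReal_add, Complex.Gamma_ofReal, Complex.Gamma_ofReal] at h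
  rw [one_div, one_div]
  exact_mod_cast h

/-- The Taylor coefficients of the Bessel–Clifford function, with the convention that `1 / Γ`
vanishes at the poles of `Γ`. -/
noncomputable def besselCliffordCoeff (ν : ℝ) (k : ℕ) : ℝ :=
  1 / ((k.factorial : ℝ) * Real.Gamma (k + ν + 1))

/-- The Bessel–Clifford function `∑ y ^ k / (k! Γ(k + ν + 1))`: the entire function for which
`I_ν(x) = (x / 2) ^ ν C_ν((x / 2) ^ 2)`. -/
noncomputable def besselClifford (ν y : ℝ) : ℝ := ∑' k : ℕ, besselCliffordCoeff ν k * y ^ k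

variable {ν x : ℝ}

lemma besselCliffordCoeff_pos (hν : -1 < ν) (k : ℕ) : 0 < besselCliffordCoeff ν k := by
  have hΓ : 0 < Real.Gamma (k + ν + 1) :=
    Real.Gamma_pos_of_pos (by linarith [k.cast_nonneg (α := ℝ)])
  unfold besselCliffordCoeff
  positivity

lemma besselCliffordCoeff_succ_mul (ν : ℝ) (k : ℕ) :
    besselCliffordCoeff ν (k + 1) * (k + 1) = besselCliffordCoeff (ν + 1) k := by
  have hΓ : ((k + 1 : ℕ) : ℝ) + ν + 1 = k + (ν + 1) + 1 := by push_cast; ring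
  rw [besselCliffordCoeff, besselCliffordCoeff, hΓ, Nat.factorial_succ]
  push_cast
  field_simp

lemma besselCliffordCoeff_sub_one (ν : ℝ) (k : ℕ) :
    besselCliffordCoeff (ν - 1) k = (k + ν) * besselCliffordCoeff ν k := by
  have hΓ : (k : ℝ) + (ν - 1) + 1 = k + ν := by ring
  rw [besselCliffordCoeff, besselCliffordCoeff, hΓ, ← one_div_mul_one_div,
    one_div_Gamma_eq_self_mul, ← one_div_mul_one_div]
  ring

lemma summable_besselClifford (ν y : ℝ) : Summable fun k ↦ besselCliffordCoeff ν k * y ^ k := by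
  have hradius : (‖y‖₊ : ENNReal) < (Complex.regularizedHGFunSeries 0 {(ν : ℂ) + 1}).radius := by
    rw [Complex.radius_regularizedHGFunSeries_eq_top (by simp)]
    exact ENNReal.coe_lt_top
  refine .of_norm ((FormalMultilinearSeries.summable_norm_mul_pow _ hradius).congr fun k ↦ ?_)
  have hcoeff : Complex.regularizedHGFunCoeff 0 {(ν : ℂ) + 1} k = besselCliffordCoeff ν k := by
    rw [Complex.regularizedHGFunCoeff, besselCliffordCoeff, add_assoc, add_comm (k : ℝ)]
    simp [← Complex.Gamma_ofReal]
  rw [Complex.regularizedHGFunSeries, FormalMultilinearSeries.ofScalars_norm, hcoeff,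
    Complex.norm_real, norm_mul, norm_pow, coe_nnnorm]

lemma besselClifford_pos (hν : -1 < ν) {y : ℝ} (hy : 0 ≤ y) : 0 < besselClifford ν y := by
  have hcoeff := besselCliffordCoeff_pos hν
  refine (summable_besselClifford ν y).tsum_pos (fun k ↦ ?_) 0 ?_
  · have := hcoeff k
    positivity
  · simpa using hcoeff 0

lemma hasSum_besselClifford_deriv (ν y : ℝ) :
    HasSum (fun k : ℕ ↦ besselCliffordCoeff ν k * (k * y ^ (k - 1)))
      (besselClifford (ν + 1) y) := by
  rw [← hasSum_nat_add_iff' 1]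
  simp only [Finset.range_one, Finset.sum_singleton, Nat.cast_zero, zero_mul, mul_zero, sub_zero]
  refine (summable_besselClifford (ν + 1) y).hasSum.congr_fun fun k ↦ ?_
  rw [← besselCliffordCoeff_succ_mul, Nat.add_sub_cancel]
  push_cast
  ring

lemma hasDerivAt_besselClifford (ν y : ℝ) :
    HasDerivAt (besselClifford ν) (besselClifford (ν + 1) y) y := by
  rw [← (hasSum_besselClifford_deriv ν y).tsum_eq]
  refine hasDerivAt_tsum_of_isPreconnected (t := Metric.ball 0 (|y| + 1)) (y₀ := y)
    (hasSum_besselClifford_deriv ν (|y| + 1)).summable.abs Metric.isOpen_ball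
    (convex_ball _ _).isPreconnected (fun k z _ ↦ (hasDerivAt_pow k z).const_mul _)
    (fun k z hz ↦ ?_) (by simp) (summable_besselClifford ν y) (by simp)
  have hz' : |z| ≤ |y| + 1 := by simpa using (mem_ball_zero_iff.1 hz).le
  rw [Real.norm_eq_abs, abs_mul, abs_mul, abs_mul, abs_mul, abs_pow, abs_pow,
    abs_of_nonneg (by positivity : 0 ≤ |y| + 1)]
  gcongr

lemma besselClifford_sub_one (ν y : ℝ) :
    besselClifford (ν - 1) y = ν * besselClifford ν y + y * besselClifford (ν + 1) y := by
  have h := ((summable_besselClifford ν y).hasSum.mul_left ν).add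
    ((hasSum_besselClifford_deriv ν y).mul_left y)
  refine (h.congr_fun fun k ↦ ?_).tsum_eq
  rw [besselCliffordCoeff_sub_one]
  rcases k with _ | k
  · simp
  · rw [Nat.add_sub_cancel]
    ring

lemma besselI_eq_rpow_mul (ν : ℝ) (hx : 0 < x) :
    besselI ν x = (x / 2) ^ ν * besselClifford ν ((x / 2) ^ 2) := by
  have hx₂ : 0 < x / 2 := half_pos hx
  rw [besselI, besselClifford, ← tsum_mul_left]
  refine tsum_congr fun k ↦ ?_
  rw [Real.rpow_add hx₂, Real.rpow_mul hx₂.le, Real.rpow_natCast, Real.rpow_two,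
    besselCliffordCoeff]
  ring

lemma besselI_pos (hν : -1 < ν) (hx : 0 < x) : 0 < besselI ν x := by
  rw [besselI_eq_rpow_mul ν hx]
  have := besselClifford_pos hν (sq_nonneg (x / 2))
  positivity

lemma besselI_sub_one (ν : ℝ) (hx : 0 < x) :
    besselI (ν - 1) x = 2 * ν / x * besselI ν x + besselI (ν + 1) x := by
  have hx₂ : x / 2 ≠ 0 := (half_pos hx).ne'
  simp only [besselI_eq_rpow_mul _ hx]
  rw [besselClifford_sub_one, Real.rpow_sub_one hx₂, Real.rpow_add_one hx₂]
  field_simp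

lemma hasDerivAt_besselI (ν : ℝ) (hx : 0 < x) :
    HasDerivAt (besselI ν) (ν / x * besselI ν x + besselI (ν + 1) x) x := by
  have hx₂ : x / 2 ≠ 0 := (half_pos hx).ne'
  have hhalf : HasDerivAt (fun y : ℝ ↦ y / 2) (1 / 2) x := (hasDerivAt_id x).div_const 2
  have h := (hhalf.rpow_const (p := ν) (Or.inl hx₂)).mul
    ((hasDerivAt_besselClifford ν ((x / 2) ^ 2)).comp x (hhalf.pow 2))
  refine (h.congr_deriv ?_).congr_of_eventuallyEq ?_
  · rw [besselI_eq_rpow_mul ν hx, besselI_eq_rpow_mul (ν + 1) hx, Real.rpow_sub_one hx₂,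
      Real.rpow_add_one hx₂, Function.comp_apply, Nat.cast_ofNat, Pi.pow_apply]
    field_simp
    ring
  · filter_upwards [Ioi_mem_nhds hx] with y hy using besselI_eq_rpow_mul ν hy

lemma eulerDeriv_besselI_eq_add (ν : ℝ) (hx : 0 < x) :
    eulerDeriv (besselI ν) x = ν * besselI ν x + x * besselI (ν + 1) x := by
  rw [eulerDeriv, (hasDerivAt_besselI ν hx).deriv]
  field_simp

lemma eulerDeriv_besselI_eq_sub (ν : ℝ) (hx : 0 < x) :
    eulerDeriv (besselI ν) x = x * besselI (ν - 1) x - ν * besselI ν x := by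
  rw [eulerDeriv_besselI_eq_add ν hx, besselI_sub_one ν hx]
  field_simp
  ring

lemma isModifiedBesselSolution_besselI (ν : ℝ) : IsModifiedBesselSolution ν (besselI ν) where
  differentiableAt _ hx := (hasDerivAt_besselI ν hx).differentiableAt
  hasDerivAt_eulerDeriv x hx := by
    have hI : HasDerivAt (besselI ν) (besselI (ν - 1) x - ν / x * besselI ν x) x := by
      refine (hasDerivAt_besselI ν hx).congr_deriv ?_
      rw [besselI_sub_one ν hx]
      ring
    have hI' := hasDerivAt_besselI (ν - 1) hx
    rw [sub_add_cancel] at hI'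
    refine ((((hasDerivAt_id x).mul hI').sub (hI.const_mul ν)).congr_deriv ?_).congr_of_eventuallyEq
      (by filter_upwards [Ioi_mem_nhds hx] with y hy using eulerDeriv_besselI_eq_sub ν hy)
    rw [id]
    field_simp
    ring

lemma eulerDeriv_besselI_pos (hν : 0 ≤ ν) (hx : 0 < x) : 0 < eulerDeriv (besselI ν) x := by
  have := besselI_pos (by linarith : -1 < ν) hx
  have := besselI_pos (by linarith : -1 < ν + 1) hx
  rw [eulerDeriv_besselI_eq_add ν hx]
  positivity

lemma tendsto_besselI_nhdsGT_zero (hν : 0 < ν) : Tendsto (besselI ν) (𝓝[>] 0) (𝓝 0) := by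
  have hcont : ContinuousAt (fun y : ℝ ↦ (y / 2) ^ ν * besselClifford ν ((y / 2) ^ 2)) 0 :=
    ((continuousAt_id.div_const 2).rpow_const (Or.inr hν.le)).mul <|
      (hasDerivAt_besselClifford ν _).continuousAt.comp ((continuousAt_id.div_const 2).pow 2)
  have h : Tendsto (fun y : ℝ ↦ (y / 2) ^ ν * besselClifford ν ((y / 2) ^ 2)) (𝓝[>] 0) (𝓝 0) := by
    simpa [Real.zero_rpow hν.ne'] using hcont.tendsto.mono_left nhdsWithin_le_nhds
  refine h.congr' ?_
  filter_upwards [self_mem_nhdsWithin] with y hy using (besselI_eq_rpow_mul ν hy).symm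

lemma tendsto_eulerDeriv_besselI_nhdsGT_zero (hν : 0 < ν) :
    Tendsto (eulerDeriv (besselI ν)) (𝓝[>] 0) (𝓝 0) := by
  have hid : Tendsto (fun y : ℝ ↦ y) (𝓝[>] 0) (𝓝 0) := tendsto_id.mono_left nhdsWithin_le_nhds
  have h := ((tendsto_besselI_nhdsGT_zero hν).const_mul ν).add
    (hid.mul (tendsto_besselI_nhdsGT_zero (add_pos hν one_pos)))
  simp only [mul_zero, add_zero] at h
  refine h.congr' ?_
  filter_upwards [self_mem_nhdsWithin] with y hy using (eulerDeriv_besselI_eq_add ν hy).symm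

end FirstKind

section SecondKind

lemma cosh_mul_cosh_eq_half_add (a b : ℝ) :
    Real.cosh a * Real.cosh b = (Real.cosh (a + b) + Real.cosh (a - b)) / 2 := by
  rw [Real.cosh_add, Real.cosh_sub]
  ring

lemma sinh_mul_sinh_eq_half_sub (a b : ℝ) :
    Real.sinh a * Real.sinh b = (Real.cosh (a + b) - Real.cosh (a - b)) / 2 := by
  rw [Real.cosh_add, Real.cosh_sub]
  ring

lemma cosh_le_exp_abs (a : ℝ) : Real.cosh a ≤ Real.exp |a| := by
  rw [← Real.cosh_abs, Real.cosh_eq]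
  have : Real.exp (-|a|) ≤ Real.exp |a| := Real.exp_le_exp.2 (neg_le_self (abs_nonneg a))
  linarith

lemma sq_div_four_le_cosh (a : ℝ) : a ^ 2 / 4 ≤ Real.cosh a := by
  rw [← Real.cosh_abs, ← sq_abs, Real.cosh_eq]
  have := Real.quadratic_le_exp_of_nonneg (abs_nonneg a)
  have := Real.exp_pos (-|a|)
  linarith [abs_nonneg a]

/-- The integrand `e^{-x cosh t} cosh(μ t)` of the integral defining `K_μ(x)`. -/
noncomputable def besselKIntegrand (μ x t : ℝ) : ℝ :=
  Real.exp (-x * Real.cosh t) * Real.cosh (μ * t)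

variable {μ x t : ℝ}

lemma besselKIntegrand_pos (μ x t : ℝ) : 0 < besselKIntegrand μ x t :=
  mul_pos (Real.exp_pos _) (Real.cosh_pos _)

lemma continuous_besselKIntegrand (μ x : ℝ) : Continuous (besselKIntegrand μ x) := by
  unfold besselKIntegrand
  fun_prop

lemma besselKIntegrand_le_exp_neg (hx : 0 < x) (ht : 4 * (|μ| + 1) / x ≤ t) :
    besselKIntegrand μ x t ≤ Real.exp (-t) := by
  have ht₀ : 0 ≤ t := le_trans (by positivity) ht
  have hexponent : -x * Real.cosh t + |μ * t| ≤ -t := by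
    have hcosh := mul_le_mul_of_nonneg_left (sq_div_four_le_cosh t) hx.le
    rw [div_le_iff₀ hx] at ht
    rw [abs_mul, abs_of_nonneg ht₀]
    nlinarith
  calc besselKIntegrand μ x t ≤ Real.exp (-x * Real.cosh t) * Real.exp |μ * t| :=
        mul_le_mul_of_nonneg_left (cosh_le_exp_abs _) (Real.exp_pos _).le
    _ = Real.exp (-x * Real.cosh t + |μ * t|) := (Real.exp_add _ _).symm
    _ ≤ Real.exp (-t) := Real.exp_le_exp.2 hexponent

lemma eventually_besselKIntegrand_le_exp_neg (μ : ℝ) (hx : 0 < x) :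
    ∀ᶠ t in atTop, besselKIntegrand μ x t ≤ Real.exp (-t) :=
  (eventually_ge_atTop _).mono fun _ ↦ besselKIntegrand_le_exp_neg hx

lemma integrableOn_besselKIntegrand (μ : ℝ) (hx : 0 < x) :
    IntegrableOn (besselKIntegrand μ x) (Ioi 0) := by
  refine integrable_of_isBigO_exp_neg one_pos (continuous_besselKIntegrand μ x).continuousOn
    (Asymptotics.IsBigO.of_bound 1 ?_)
  filter_upwards [eventually_besselKIntegrand_le_exp_neg μ hx] with t ht
  rwa [Real.norm_of_nonneg (besselKIntegrand_pos μ x t).le,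
    Real.norm_of_nonneg (Real.exp_pos _).le, one_mul, neg_one_mul]

lemma besselK_pos (μ : ℝ) (hx : 0 < x) : 0 < besselK μ x := by
  change 0 < ∫ t in Ioi 0, besselKIntegrand μ x t
  have hsupport : Function.support (besselKIntegrand μ x) = univ :=
    eq_univ_of_forall fun t ↦ (besselKIntegrand_pos μ x t).ne'
  rw [integral_pos_iff_support_of_nonneg (fun t ↦ (besselKIntegrand_pos μ x t).le)
    (integrableOn_besselKIntegrand μ hx), hsupport]
  simp

lemma besselK_neg (μ x : ℝ) : besselK (-μ) x = besselK μ x := by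
  simp only [besselK, neg_mul μ, Real.cosh_neg]

lemma hasDerivAt_besselKIntegrand (μ x t : ℝ) :
    HasDerivAt (fun y ↦ besselKIntegrand μ y t)
      (-(besselKIntegrand (μ + 1) x t + besselKIntegrand (μ - 1) x t) / 2) x := by
  have h := (((hasDerivAt_id x).neg.mul_const (Real.cosh t)).exp).mul_const (Real.cosh (μ * t))
  refine h.congr_deriv ?_
  have hprod := cosh_mul_cosh_eq_half_add (μ * t) t
  simp only [besselKIntegrand, add_mul, sub_mul, one_mul, Pi.neg_apply, id]
  linear_combination -Real.exp (-x * Real.cosh t) * hprod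

lemma antitone_besselKIntegrand (μ t : ℝ) : Antitone fun x ↦ besselKIntegrand μ x t := by
  intro x y hxy
  have := Real.cosh_pos t
  have := Real.cosh_pos (μ * t)
  simp only [besselKIntegrand]
  gcongr

lemma hasDerivAt_besselK (μ : ℝ) (hx : 0 < x) :
    HasDerivAt (besselK μ) (-(besselK (μ + 1) x + besselK (μ - 1) x) / 2) x := by
  have hx₂ : 0 < x / 2 := half_pos hx
  have h := hasDerivAt_integral_of_dominated_loc_of_deriv_le (μ := volume.restrict (Ioi 0))
    (F := besselKIntegrand μ) (s := Ioi (x / 2)) (x₀ := x)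
    (F' := fun y t ↦ -(besselKIntegrand (μ + 1) y t + besselKIntegrand (μ - 1) y t) / 2)
    (bound := fun t ↦
      (besselKIntegrand (μ + 1) (x / 2) t + besselKIntegrand (μ - 1) (x / 2) t) / 2)
    (Ioi_mem_nhds (half_lt_self hx))
    (.of_forall fun y ↦ (continuous_besselKIntegrand μ y).aestronglyMeasurable)
    (integrableOn_besselKIntegrand μ hx)
    (((continuous_besselKIntegrand _ x).add (continuous_besselKIntegrand _ x)).neg.div_const
      2).aestronglyMeasurable
    (.of_forall fun t y hy ↦ ?_)
    (((integrableOn_besselKIntegrand _ hx₂).add (integrableOn_besselKIntegrand _ hx₂)).div_const 2)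
    (.of_forall fun t y _ ↦ hasDerivAt_besselKIntegrand μ y t)
  · refine h.2.congr_deriv ?_
    rw [integral_div, integral_neg, integral_add (integrableOn_besselKIntegrand _ hx)
      (integrableOn_besselKIntegrand _ hx)]
    rfl
  · have hanti₁ := antitone_besselKIntegrand (μ + 1) t (mem_Ioi.1 hy).le
    have hanti₂ := antitone_besselKIntegrand (μ - 1) t (mem_Ioi.1 hy).le
    have := besselKIntegrand_pos (μ + 1) y t
    have := besselKIntegrand_pos (μ - 1) y t
    rw [neg_div, norm_neg, Real.norm_of_nonneg (by positivity)]
    linarith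

lemma hasDerivAt_exp_neg_mul_cosh_mul_sinh (μ x t : ℝ) :
    HasDerivAt (fun t ↦ Real.exp (-x * Real.cosh t) * Real.sinh (μ * t))
      (μ * besselKIntegrand μ x t -
        x / 2 * (besselKIntegrand (μ + 1) x t - besselKIntegrand (μ - 1) x t)) t := by
  have h := (((Real.hasDerivAt_cosh t).const_mul (-x)).exp).mul
    (((hasDerivAt_id t).const_mul μ).sinh)
  refine h.congr_deriv ?_
  have hprod := sinh_mul_sinh_eq_half_sub (μ * t) t
  simp only [besselKIntegrand, add_mul, sub_mul, one_mul, id]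
  linear_combination -x * Real.exp (-x * Real.cosh t) * hprod

lemma tendsto_exp_neg_mul_cosh_mul_sinh_atTop (μ : ℝ) (hx : 0 < x) :
    Tendsto (fun t ↦ Real.exp (-x * Real.cosh t) * Real.sinh (μ * t)) atTop (𝓝 0) := by
  refine squeeze_zero_norm' ?_ Real.tendsto_exp_neg_atTop_nhds_zero
  filter_upwards [eventually_besselKIntegrand_le_exp_neg μ hx] with t ht
  refine le_trans ?_ ht
  rw [norm_mul, Real.norm_of_nonneg (Real.exp_pos _).le, Real.norm_eq_abs, Real.abs_sinh,
    besselKIntegrand, ← Real.cosh_abs (μ * t)]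
  exact mul_le_mul_of_nonneg_left (Real.sinh_lt_cosh _).le (Real.exp_pos _).le

lemma besselK_add_one_sub_besselK_sub_one (μ : ℝ) (hx : 0 < x) :
    besselK (μ + 1) x - besselK (μ - 1) x = 2 * μ / x * besselK μ x := by
  have hK := fun ρ ↦ integrableOn_besselKIntegrand ρ hx
  have hK_diff : IntegrableOn (fun t ↦
      x / 2 * (besselKIntegrand (μ + 1) x t - besselKIntegrand (μ - 1) x t)) (Ioi 0) :=
    ((hK (μ + 1)).sub (hK (μ - 1))).const_mul (x / 2)
  have hprimitive := integral_Ioi_of_hasDerivAt_of_tendsto (a := 0)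
    (hasDerivAt_exp_neg_mul_cosh_mul_sinh μ x 0).continuousAt.continuousWithinAt
    (fun t _ ↦ hasDerivAt_exp_neg_mul_cosh_mul_sinh μ x t) (((hK μ).const_mul μ).sub hK_diff)
    (tendsto_exp_neg_mul_cosh_mul_sinh_atTop μ hx)
  have hrec : μ * besselK μ x - x / 2 * (besselK (μ + 1) x - besselK (μ - 1) x) = 0 := by
    rw [mul_zero, Real.sinh_zero, mul_zero, sub_zero] at hprimitive
    rw [← hprimitive, integral_sub ((hK μ).const_mul μ) hK_diff, integral_const_mul,
      integral_const_mul, integral_sub (hK _) (hK _)]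
    rfl
  field_simp
  linarith

lemma besselK_le_exp_mul_besselK_one (μ : ℝ) (hx : 1 ≤ x) :
    besselK μ x ≤ Real.exp (1 - x) * besselK μ 1 := by
  simp only [besselK]
  rw [← integral_const_mul]
  refine integral_mono (integrableOn_besselKIntegrand μ (by linarith))
    ((integrableOn_besselKIntegrand μ one_pos).const_mul _) fun t ↦ ?_
  have := Real.cosh_pos (μ * t)
  have hexponent : -x * Real.cosh t ≤ 1 - x + -1 * Real.cosh t := by
    nlinarith [Real.one_le_cosh t]
  calc Real.exp (-x * Real.cosh t) * Real.cosh (μ * t)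
      ≤ Real.exp (1 - x + -1 * Real.cosh t) * Real.cosh (μ * t) := by gcongr
    _ = Real.exp (1 - x) * (Real.exp (-1 * Real.cosh t) * Real.cosh (μ * t)) := by
        rw [Real.exp_add, mul_assoc]

lemma tendsto_mul_besselK_atTop (μ : ℝ) : Tendsto (fun y ↦ y * besselK μ y) atTop (𝓝 0) := by
  have hexp : Tendsto (fun y ↦ y * (Real.exp (1 - y) * besselK μ 1)) atTop (𝓝 0) := by
    have h := (Real.tendsto_pow_mul_exp_neg_atTop_nhds_zero 1).mul_const
      (Real.exp 1 * besselK μ 1)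
    rw [zero_mul] at h
    refine h.congr fun y ↦ ?_
    rw [pow_one, sub_eq_add_neg, Real.exp_add]
    ring
  refine squeeze_zero' ?_ ?_ hexp
  · filter_upwards [eventually_gt_atTop 0] with y hy using (mul_pos hy (besselK_pos μ hy)).le
  · filter_upwards [eventually_ge_atTop 1] with y hy
    exact mul_le_mul_of_nonneg_left (besselK_le_exp_mul_besselK_one μ hy) (by linarith)

lemma eulerDeriv_besselK (ν : ℝ) (hx : 0 < x) :
    eulerDeriv (besselK ν) x = ν * besselK ν x - x * besselK (ν + 1) x := by
  have hrec := besselK_add_one_sub_besselK_sub_one ν hx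
  rw [eulerDeriv, (hasDerivAt_besselK ν hx).deriv]
  field_simp at hrec ⊢
  linarith

lemma eulerDeriv_besselK_neg (ν : ℝ) (hx : 0 < x) : eulerDeriv (besselK ν) x < 0 := by
  rw [eulerDeriv, (hasDerivAt_besselK ν hx).deriv]
  have := besselK_pos (ν + 1) hx
  have := besselK_pos (ν - 1) hx
  exact mul_neg_of_pos_of_neg hx (by linarith)

lemma isModifiedBesselSolution_besselK (ν : ℝ) : IsModifiedBesselSolution ν (besselK ν) where
  differentiableAt _ hx := (hasDerivAt_besselK ν hx).differentiableAt
  hasDerivAt_eulerDeriv x hx := by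
    have hrec := besselK_add_one_sub_besselK_sub_one ν hx
    have hrec' := besselK_add_one_sub_besselK_sub_one (ν + 1) hx
    have hK' := hasDerivAt_besselK (ν + 1) hx
    rw [add_sub_cancel_right] at hrec' hK'
    refine ((((hasDerivAt_besselK ν hx).const_mul ν).sub
      ((hasDerivAt_id x).mul hK')).congr_deriv ?_).congr_of_eventuallyEq
      (by filter_upwards [Ioi_mem_nhds hx] with y hy using eulerDeriv_besselK ν hy)
    rw [id]
    field_simp at hrec hrec' ⊢
    linear_combination ν * hrec + x * hrec'

lemma tendsto_eulerDeriv_besselK_atTop (ν : ℝ) :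
    Tendsto (eulerDeriv (besselK ν)) atTop (𝓝 0) := by
  have h := ((tendsto_zero_of_tendsto_self_mul_atTop
    (tendsto_mul_besselK_atTop ν)).const_mul ν).sub (tendsto_mul_besselK_atTop (ν + 1))
  rw [mul_zero, sub_zero] at h
  refine h.congr' ?_
  filter_upwards [eventually_gt_atTop 0] with y hy using (eulerDeriv_besselK ν hy).symm

end SecondKind

section LogDerivative

variable {ν x : ℝ}

lemma phiI_eq_add (hν : -1 < ν) (hx : 0 < x) :
    phiI ν x = ν + eulerDeriv (besselI ν) x / besselI ν x := by
  have := besselI_pos hν hx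
  rw [phiI, eulerDeriv_besselI_eq_sub ν hx]
  field_simp
  ring

lemma phiK_eq_sub (ν : ℝ) (hx : 0 < x) :
    phiK ν x = ν - eulerDeriv (besselK ν) x / besselK ν x := by
  have := besselK_pos ν hx
  rw [phiK, eulerDeriv_besselK ν hx]
  field_simp
  ring

lemma lt_phiI (hν : 0 ≤ ν) (hx : 0 < x) : ν < phiI ν x := by
  have hν' : -1 < ν := by linarith
  rw [phiI_eq_add hν' hx]
  exact lt_add_of_pos_right ν (div_pos (eulerDeriv_besselI_pos hν hx) (besselI_pos hν' hx))

lemma lt_phiK (ν : ℝ) (hx : 0 < x) : ν < phiK ν x := by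
  rw [phiK_eq_sub ν hx, lt_sub_comm, sub_self]
  exact div_neg_of_neg_of_pos (eulerDeriv_besselK_neg ν hx) (besselK_pos ν hx)

lemma deriv_phiI (hν : -1 < ν) (hx : 0 < x) :
    deriv (phiI ν) x = turanian ν (besselI ν) x / (x * besselI ν x ^ 2) := by
  have h := ((isModifiedBesselSolution_besselI ν).hasDerivAt_eulerDeriv_div hx
    (besselI_pos hν hx).ne').const_add ν
  refine (h.congr_of_eventuallyEq ?_).deriv
  filter_upwards [Ioi_mem_nhds hx] with y hy using phiI_eq_add hν hy

lemma deriv_phiK (ν : ℝ) (hx : 0 < x) :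
    deriv (phiK ν) x = -turanian ν (besselK ν) x / (x * besselK ν x ^ 2) := by
  have h := ((isModifiedBesselSolution_besselK ν).hasDerivAt_eulerDeriv_div hx
    (besselK_pos ν hx).ne').const_sub ν
  rw [neg_div]
  refine (h.congr_of_eventuallyEq ?_).deriv
  filter_upwards [Ioi_mem_nhds hx] with y hy using phiK_eq_sub ν hy

lemma phiI_sub_sq (hν : -1 < ν) (hx : 0 < x) :
    (phiI ν x - ν) ^ 2 = ν ^ 2 + x * (x - deriv (phiI ν) x) := by
  have := besselI_pos hν hx
  rw [deriv_phiI hν hx, phiI_eq_add hν hx, turanian]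
  field_simp
  ring

lemma phiK_sub_sq (ν : ℝ) (hx : 0 < x) :
    (phiK ν x - ν) ^ 2 = ν ^ 2 + x * (x + deriv (phiK ν) x) := by
  have := besselK_pos ν hx
  rw [deriv_phiK ν hx, phiK_eq_sub ν hx, turanian]
  field_simp
  ring

lemma deriv_phiI_pos (hν : 0 < ν) (hx : 0 < x) : 0 < deriv (phiI ν) x := by
  have hI : ∀ y, 0 < y → 0 < besselI ν y := fun y hy ↦ besselI_pos (by linarith) hy
  have hT : 0 < turanian ν (besselI ν) x :=
    (isModifiedBesselSolution_besselI ν).turanian_pos (fun y hy ↦ (hI y hy).ne')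
      (tendsto_besselI_nhdsGT_zero hν) (tendsto_eulerDeriv_besselI_nhdsGT_zero hν) hx
  have := hI x hx
  rw [deriv_phiI (by linarith) hx]
  positivity

lemma deriv_phiI_lt_one (hν : 1 / 2 ≤ ν) (hx : 0 < x) : deriv (phiI ν) x < 1 := by
  have hν₀ : 0 < ν := by linarith
  have hI : ∀ y, 0 < y → 0 < besselI ν y := fun y hy ↦ besselI_pos (by linarith) hy
  have := hI x hx
  rw [deriv_phiI (by linarith) hx, div_lt_one (by positivity)]
  exact (isModifiedBesselSolution_besselI ν).turanian_lt_mul_sq (hν.trans (le_abs_self ν)) hI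
    (fun y hy ↦ eulerDeriv_besselI_pos hν₀.le hy) (tendsto_besselI_nhdsGT_zero hν₀)
    (tendsto_eulerDeriv_besselI_nhdsGT_zero hν₀) hx

lemma deriv_phiK_pos (ν : ℝ) (hx : 0 < x) : 0 < deriv (phiK ν) x := by
  have hT : turanian ν (besselK ν) x < 0 :=
    (isModifiedBesselSolution_besselK ν).turanian_neg (fun y hy ↦ (besselK_pos ν hy).ne')
      (tendsto_mul_besselK_atTop ν) (tendsto_eulerDeriv_besselK_atTop ν) hx
  have := besselK_pos ν hx
  rw [deriv_phiK ν hx]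
  exact div_pos (neg_pos.2 hT) (by positivity)

lemma deriv_phiK_lt_one (hν : 1 / 2 < |ν|) (hx : 0 < x) : deriv (phiK ν) x < 1 := by
  have := besselK_pos ν hx
  rw [deriv_phiK ν hx, div_lt_one (by positivity), neg_lt]
  exact (isModifiedBesselSolution_besselK ν).neg_mul_sq_lt_turanian hν
    (fun y hy ↦ besselK_pos ν hy) (tendsto_mul_besselK_atTop ν)
    (tendsto_eulerDeriv_besselK_atTop ν) hx

lemma phiK_one_half (hx : 0 < x) : phiK (1 / 2) x = x + 1 := by
  have hrec := besselK_add_one_sub_besselK_sub_one (1 / 2) hx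
  rw [show (1 / 2 - 1 : ℝ) = -(1 / 2) by norm_num, besselK_neg] at hrec
  have := besselK_pos (1 / 2) hx
  rw [phiK, ← sub_add_cancel (besselK (1 / 2 + 1) x) (besselK (1 / 2) x), hrec]
  field_simp
  ring

lemma deriv_phiK_one_half (hx : 0 < x) : deriv (phiK (1 / 2)) x = 1 := by
  refine (((hasDerivAt_id x).add_const 1).congr_of_eventuallyEq ?_).deriv
  filter_upwards [Ioi_mem_nhds hx] with y hy using phiK_one_half hy

lemma deriv_phiK_le_one (hν : 1 / 2 ≤ ν) (hx : 0 < x) : deriv (phiK ν) x ≤ 1 := by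
  rcases hν.eq_or_lt with rfl | hν
  · exact (deriv_phiK_one_half hx).le
  · exact (deriv_phiK_lt_one (hν.trans_le (le_abs_self ν)) hx).le

lemma deriv_phiK_eq_one_iff (hν : 1 / 2 ≤ ν) (hx : 0 < x) :
    deriv (phiK ν) x = 1 ↔ ν = 1 / 2 := by
  refine ⟨fun h ↦ ?_, fun h ↦ h ▸ deriv_phiK_one_half hx⟩
  by_contra hne
  have hlt : 1 / 2 < |ν| := (lt_of_le_of_ne hν (Ne.symm hne)).trans_le (le_abs_self ν)
  exact (deriv_phiK_lt_one hlt hx).ne h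

lemma add_sqrt_lt_phiI (hν : 1 / 2 ≤ ν) (hx : 0 < x) :
    ν + √(ν ^ 2 + x * (x - 1)) < phiI ν x := by
  rw [← lt_sub_iff_add_lt', Real.sqrt_lt' (sub_pos.2 (lt_phiI (by linarith) hx)),
    phiI_sub_sq (by linarith) hx]
  gcongr
  exact deriv_phiI_lt_one hν hx

lemma phiI_lt_add_sqrt (hν : 0 < ν) (hx : 0 < x) : phiI ν x < ν + √(ν ^ 2 + x * (x + 1)) := by
  rw [← sub_lt_iff_lt_add', Real.lt_sqrt (sub_pos.2 (lt_phiI hν.le hx)).le,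
    phiI_sub_sq (by linarith) hx]
  gcongr
  linarith [deriv_phiI_pos hν hx]

lemma add_sqrt_lt_phiK (ν : ℝ) (hx : 0 < x) : ν + √(ν ^ 2 + x * (x - 1)) < phiK ν x := by
  rw [← lt_sub_iff_add_lt', Real.sqrt_lt' (sub_pos.2 (lt_phiK ν hx)), phiK_sub_sq ν hx]
  gcongr
  linarith [deriv_phiK_pos ν hx]

lemma phiK_le_add_sqrt (hν : 1 / 2 ≤ ν) (hx : 0 < x) :
    phiK ν x ≤ ν + √(ν ^ 2 + x * (x + 1)) := by
  rw [← sub_le_iff_le_add']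
  refine Real.le_sqrt_of_sq_le ?_
  rw [phiK_sub_sq ν hx]
  gcongr
  exact deriv_phiK_le_one hν hx

lemma phiK_eq_add_sqrt_iff (ν : ℝ) (hx : 0 < x) :
    phiK ν x = ν + √(ν ^ 2 + x * (x + 1)) ↔ deriv (phiK ν) x = 1 := by
  have hφ : 0 ≤ phiK ν x - ν := (sub_pos.2 (lt_phiK ν hx)).le
  rw [← sub_eq_iff_eq_add', eq_comm, Real.sqrt_eq_iff_eq_sq (by positivity) hφ, phiK_sub_sq ν hx,
    add_right_inj, mul_right_inj' hx.ne', add_right_inj, eq_comm]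

end LogDerivative

theorem phi_bounds_13 (ν : ℝ) (hν : 1 / 2 ≤ ν) (x : ℝ) (hx : 0 < x) :
    (0 < deriv (phiI ν) x ∧ deriv (phiI ν) x < 1) ∧
    (0 < deriv (phiK ν) x ∧ deriv (phiK ν) x ≤ 1) ∧
    (ν + Real.sqrt (ν ^ 2 + x * (x - 1)) < phiI ν x ∧
      phiI ν x < ν + Real.sqrt (ν ^ 2 + x * (x + 1))) ∧
    (ν + Real.sqrt (ν ^ 2 + x * (x - 1)) < phiK ν x ∧
      phiK ν x ≤ ν + Real.sqrt (ν ^ 2 + x * (x + 1))) ∧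
    ((deriv (phiK ν) x = 1 ∨ phiK ν x = ν + Real.sqrt (ν ^ 2 + x * (x + 1))) ↔
      ν = 1 / 2) :=
  ⟨⟨deriv_phiI_pos (by linarith) hx, deriv_phiI_lt_one hν hx⟩,
   ⟨deriv_phiK_pos ν hx, deriv_phiK_le_one hν hx⟩,
   ⟨add_sqrt_lt_phiI hν hx, phiI_lt_add_sqrt (by linarith) hx⟩,
   ⟨add_sqrt_lt_phiK ν hx, phiK_le_add_sqrt hν hx⟩,
   by rw [phiK_eq_add_sqrt_iff ν hx, or_self, deriv_phiK_eq_one_iff hν hx]⟩
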